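/- For every sign string S of length n ≤ 12 that is not a cyclic rotation of (+,+,−,−,+,+,−,−,+,+,−,−), and every dominant state string J for S, the web tensor of any complete execution of the growth algorithm from (S,J) has the negative-exponent property relative to J. -/

import Mathlib

/-!
The proof rests on three facts.

*The web tensor does not depend on the order of the rules.* Rules at disjoint positions commute, and
two rules overlapping in one letter can each be followed by one further rule so that the words and
the tensors agree (`overlap`). Hence the web tensor of any execution can be computed starting with
any applicable rule (`exchange`).

*Some first steps preserve the negative-exponent property.* The maps `b` and `t` have entries in
`ℤ[v⁻¹]` and keep the leading term isolated, so U- and Y-rules always preserve the property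
(`NE.uy`). The map attached to an H-rule has a single entry with a positive exponent, namely `v` on
the states `(1, -1)`. If the H-rule is followed by a U- or Y-rule overlapping it, then the
coefficients met by this entry carry a factor `v⁻¹` from the second rule, and the property survives
(`NE.h_right`, `NE.h_left`). The leading coefficient is controlled by the fact that web tensors are
lexicographically triangular (`Run.triangular`).

*Short words always offer such a first step.* A finite search, cut as soon as such a step appears or
the lattice path is too far from the origin, shows that every nonempty dominant word of length at
most 12 has one unless its signs form a rotation of `base` (`check_twelve`, `red_of_path`).

The steps in question shorten the word, and a word of fewer than 12 letters is never a rotation of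
`base`, so strong induction on the length concludes (`Run.ne`). Dominance holds for every word that
admits a complete execution (`Run.path`).
-/

noncomputable section

/-- The ground field `K = ℚ(v)`. -/
abbrev K : Type := RatFunc ℚ

/-- The indeterminate `v`. -/
def v : K := RatFunc.X

/-- The three states `-1, 0, 1`. -/
inductive St where
  | neg : St
  | zero : St
  | pos : St
deriving DecidableEq

instance : Fintype St where
  elems := {St.neg, St.zero, St.pos}
  complete := fun x => by cases x <;> simp

/-- The integer value of a state. -/
def stval : St → ℤ
  | .neg => -1
  | .zero => 0
  | .pos => 1

/-- The order `-1 < 0 < 1` on states. -/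
def stLt (a b : St) : Prop := stval a < stval b

/-- The weight `μ(s, j) ∈ ℤ²`; `true` is the sign `+`, `false` is `-`. -/
def wt : Bool → St → ℤ × ℤ
  | true, .pos => (1, 0)
  | true, .zero => (-1, 1)
  | true, .neg => (0, -1)
  | false, .pos => (0, 1)
  | false, .zero => (1, -1)
  | false, .neg => (-1, 0)

/-- Total weight `Σ μ(s_k, j_k)` of a sign string and a state string. -/
def wtSum (S : List Bool) (J : List St) : ℤ × ℤ :=
  ((S.zip J).map fun p => wt p.1 p.2).sum

/-- A state string is dominant if its lattice path stays in the dominant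
Weyl chamber and returns to the origin. -/
def Dominant (S : List Bool) (J : List St) : Prop :=
  J.length = S.length ∧
  (∀ k : ℕ, 0 ≤ (wtSum (S.take k) (J.take k)).1 ∧ 0 ≤ (wtSum (S.take k) (J.take k)).2) ∧
  wtSum S J = 0

/-- Coefficients of `b^{+-}(1) ∈ V⁺ ⊗ V⁻`. -/
def bCpm : St → St → K
  | .pos, .neg => 1
  | .zero, .zero => v⁻¹
  | .neg, .pos => v⁻¹ ^ 2
  | _, _ => 0

/-- Coefficients of `b^{-+}(1) ∈ V⁻ ⊗ V⁺`. -/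
def bCmp : St → St → K
  | .pos, .neg => 1
  | .zero, .zero => v⁻¹
  | .neg, .pos => v⁻¹ ^ 2
  | _, _ => 0

/-- Matrix entries of `σ_{+-} : V⁺ ⊗ V⁻ → K`. -/
def sCpm : St → St → K
  | .neg, .pos => 1
  | .zero, .zero => v
  | .pos, .neg => v ^ 2
  | _, _ => 0

/-- Matrix entries of `σ_{-+} : V⁻ ⊗ V⁺ → K`. -/
def sCmp : St → St → K
  | .neg, .pos => 1
  | .zero, .zero => v
  | .pos, .neg => v ^ 2
  | _, _ => 0

/-- `tYpp a b c` is the coefficient of `e_a ⊗ e_b` in `t^{++}_-(e_c)`. -/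
def tYpp : St → St → St → K
  | .pos, .zero, .pos => 1
  | .zero, .pos, .pos => v⁻¹
  | .pos, .neg, .zero => 1
  | .neg, .pos, .zero => v⁻¹
  | .zero, .neg, .neg => 1
  | .neg, .zero, .neg => v⁻¹
  | _, _, _ => 0

/-- `tYmm a b c` is the coefficient of `e_a ⊗ e_b` in `t^{--}_+(e_c)`. -/
def tYmm : St → St → St → K
  | .pos, .zero, .pos => 1
  | .zero, .pos, .pos => v⁻¹
  | .pos, .neg, .zero => 1
  | .neg, .pos, .zero => v⁻¹
  | .zero, .neg, .neg => 1
  | .neg, .zero, .neg => v⁻¹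
  | _, _, _ => 0

/-- `tLpp a b c` is the coefficient of `e_c` in `t^-_{++}(e_a ⊗ e_b)`. -/
def tLpp : St → St → St → K
  | .pos, .zero, .pos => v
  | .zero, .pos, .pos => 1
  | .pos, .neg, .zero => v
  | .neg, .pos, .zero => 1
  | .zero, .neg, .neg => v
  | .neg, .zero, .neg => 1
  | _, _, _ => 0

/-- `tLmm a b c` is the coefficient of `e_c` in `t^+_{--}(e_a ⊗ e_b)`. -/
def tLmm : St → St → St → K
  | .pos, .zero, .pos => v
  | .zero, .pos, .pos => 1
  | .pos, .neg, .zero => v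
  | .neg, .pos, .zero => 1
  | .zero, .neg, .neg => v
  | .neg, .zero, .neg => 1
  | _, _, _ => 0

/-- Matrix entries of the H-map
`(id_{V⁺} ⊗ t^-_{++}) ∘ (t^{++}_- ⊗ id_{V⁺}) : V⁻ ⊗ V⁺ → V⁺ ⊗ V⁻`:
`HCpm a b c d` is the coefficient of `e_a ⊗ e_b` in the image of `e_c ⊗ e_d`. -/
def HCpm (a b c d : St) : K := ∑ y : St, tYpp a y c * tLpp y d b

/-- Matrix entries of the H-map
`(t^-_{++} ⊗ id_{V⁺}) ∘ (id_{V⁺} ⊗ t^{++}_-) : V⁺ ⊗ V⁻ → V⁻ ⊗ V⁺`: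
`HCmp a b c d` is the coefficient of `e_a ⊗ e_b` in the image of `e_c ⊗ e_d`. -/
def HCmp (a b c d : St) : K := ∑ x : St, tLpp c x a * tYpp x b d

/-- State patterns of the three H-rules: `(j_k, j_{k+1})` on top, the
replacement below. -/
inductive HPat : St → St → St → St → Prop where
  | h1 : HPat .pos .zero .zero .pos
  | h2 : HPat .zero .zero .neg .pos
  | h3 : HPat .zero .neg .neg .zero

/-- State patterns of the three Y-rules. -/
inductive YPat : St → St → St → Prop where
  | y1 : YPat .pos .zero .pos
  | y2 : YPat .pos .neg .zero
  | y3 : YPat .zero .neg .neg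

/-- One application of a growth rule, rewriting `(S, J)` to `(S', J')`. -/
inductive Step : List Bool → List St → List Bool → List St → Prop where
  | hstep (A B : List Bool) (P Q : List St) (s1 s2 : Bool) (j1 j2 j1' j2' : St)
      (hl : A.length = P.length) (hs : s1 ≠ s2) (hp : HPat j1 j2 j1' j2') :
      Step (A ++ s1 :: s2 :: B) (P ++ j1 :: j2 :: Q)
        (A ++ (!s1) :: (!s2) :: B) (P ++ j1' :: j2' :: Q)
  | ustep (A B : List Bool) (P Q : List St) (s1 s2 : Bool)
      (hl : A.length = P.length) (hs : s1 ≠ s2) :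
      Step (A ++ s1 :: s2 :: B) (P ++ St.pos :: St.neg :: Q) (A ++ B) (P ++ Q)
  | ystep (A B : List Bool) (P Q : List St) (s : Bool) (j1 j2 j' : St)
      (hl : A.length = P.length) (hp : YPat j1 j2 j') :
      Step (A ++ s :: s :: B) (P ++ j1 :: j2 :: Q) (A ++ (!s) :: B) (P ++ j' :: Q)

/-- A complete execution of the growth algorithm from `(S, J)` down to the
pair of empty strings. -/
inductive Exec : List Bool → List St → Type where
  | nil : Exec [] []
  | hstep (A B : List Bool) (P Q : List St) (s1 s2 : Bool) (j1 j2 j1' j2' : St)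
      (hl : A.length = P.length) (hs : s1 ≠ s2) (hp : HPat j1 j2 j1' j2')
      (e : Exec (A ++ (!s1) :: (!s2) :: B) (P ++ j1' :: j2' :: Q)) :
      Exec (A ++ s1 :: s2 :: B) (P ++ j1 :: j2 :: Q)
  | ustep (A B : List Bool) (P Q : List St) (s1 s2 : Bool)
      (hl : A.length = P.length) (hs : s1 ≠ s2)
      (e : Exec (A ++ B) (P ++ Q)) :
      Exec (A ++ s1 :: s2 :: B) (P ++ St.pos :: St.neg :: Q)
  | ystep (A B : List Bool) (P Q : List St) (s : Bool) (j1 j2 j' : St)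
      (hl : A.length = P.length) (hp : YPat j1 j2 j')
      (e : Exec (A ++ (!s) :: B) (P ++ j' :: Q)) :
      Exec (A ++ s :: s :: B) (P ++ j1 :: j2 :: Q)

/-- The web tensor of an execution, as coordinates with respect to the basis
`e^S_J` of `V^S`: `web e L` is the coefficient of `e^S_L`. -/
def web : {S : List Bool} → {J : List St} → Exec S J → List St → K
  | _, _, .nil, L => if L = [] then 1 else 0
  | _, _, .hstep A _ _ _ s1 _ _ _ _ _ _ _ _ e, L =>
      match L.drop A.length with
      | a :: b :: R =>
          ∑ c : St, ∑ d : St,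
            (if s1 then HCpm a b c d else HCmp a b c d) *
              web e (L.take A.length ++ c :: d :: R)
      | _ => 0
  | _, _, .ustep A _ _ _ s1 _ _ _ e, L =>
      match L.drop A.length with
      | a :: b :: R => (if s1 then bCpm a b else bCmp a b) * web e (L.take A.length ++ R)
      | _ => 0
  | _, _, .ystep A _ _ _ s _ _ _ _ _ e, L =>
      match L.drop A.length with
      | a :: b :: R =>
          ∑ c : St, (if s then tYpp a b c else tYmm a b c) * web e (L.take A.length ++ c :: R)
      | _ => 0

/-- `c ∈ v⁻¹ ℤ[v⁻¹]`: a polynomial in `v⁻¹` with zero constant term. -/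
def ZeroConst (c : K) : Prop :=
  ∃ p : Polynomial ℤ, p.coeff 0 = 0 ∧ c = Polynomial.aeval v⁻¹ p

/-- `x` has the negative-exponent property relative to a state string `J`
(`n` is the length of the ambient sign string). -/
def NegExpProp (n : ℕ) (x : List St → K) (J : List St) : Prop :=
  x J = 1 ∧ ∀ J' : List St, J'.length = n → J' ≠ J → ZeroConst (x J')

/-- `c ∈ ℕ[v, v⁻¹]`: a Laurent polynomial with nonnegative integer
coefficients. -/
def IsNatLaurent (c : K) : Prop :=
  ∃ (p : Polynomial ℕ) (m : ℕ), c = v⁻¹ ^ m * Polynomial.aeval v p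

/-- `c ∈ ℤ[v⁻¹]`. -/
def InZInv (c : K) : Prop := ∃ p : Polynomial ℤ, c = Polynomial.aeval v⁻¹ p

/-- Property P: all coefficients lie in `ℤ[v⁻¹]` and at most one of them has a
nonzero constant term. -/
def PropP (n : ℕ) (x : List St → K) : Prop :=
  (∀ J : List St, J.length = n → InZInv (x J)) ∧
  ∀ J1 J2 : List St, J1.length = n → J2.length = n →
    ¬ ZeroConst (x J1) → ¬ ZeroConst (x J2) → J1 = J2

/-- The sign string `(+,+,−,−,+,+,−,−,+,+,−,−)`. -/
def base : List Bool :=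
  [true, true, false, false, true, true, false, false, true, true, false, false]


/-! ### Words and local rewriting rules -/

namespace WebGrowth

/-- A letter: a sign together with its state. -/
abbrev Letter : Type := Bool × St

/-- The three kinds of growth rules. -/
inductive Kind where
  | u : Kind
  | y : Kind
  | h : Kind

/-- The number of letters by which a rule of the given kind replaces a pair of letters. -/
def Kind.out : Kind → ℕ
  | .u => 0
  | .y => 1
  | .h => 2

/-- The local maps `b`, `t` and `H`, in sparse form: `coef κ a b` lists the nonzero matrix entries
with output `e_a ⊗ e_b`, each paired with the input states it multiplies. These maps do not depend
on the signs. -/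
def coef : Kind → St → St → List (K × List St)
  | .u, .pos, .neg => [(1, [])]
  | .u, .zero, .zero => [(v⁻¹, [])]
  | .u, .neg, .pos => [(v⁻¹ ^ 2, [])]
  | .u, _, _ => []
  | .y, .pos, .zero => [(1, [.pos])]
  | .y, .zero, .pos => [(v⁻¹, [.pos])]
  | .y, .pos, .neg => [(1, [.zero])]
  | .y, .neg, .pos => [(v⁻¹, [.zero])]
  | .y, .zero, .neg => [(1, [.neg])]
  | .y, .neg, .zero => [(v⁻¹, [.neg])]
  | .y, _, _ => []
  | .h, .pos, .neg => [(v, [.pos, .neg]), (1, [.zero, .zero])]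
  | .h, .zero, .zero => [(1, [.pos, .neg]), (1, [.neg, .pos])]
  | .h, .neg, .pos => [(1, [.zero, .zero]), (v⁻¹, [.neg, .pos])]
  | .h, a, b => [(1, [b, a])]

/-- `Rule κ p q o`: a growth rule of kind `κ` rewrites the adjacent letters `p, q` to `o`. -/
inductive Rule : Kind → Letter → Letter → List Letter → Prop where
  | u (s : Bool) : Rule .u (s, .pos) (!s, .neg) []
  | y (s : Bool) {j1 j2 j' : St} (hp : YPat j1 j2 j') : Rule .y (s, j1) (s, j2) [(!s, j')]
  | h (s : Bool) {j1 j2 j1' j2' : St} (hp : HPat j1 j2 j1' j2') :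
      Rule .h (s, j1) (!s, j2) [(!s, j1'), (s, j2')]

/-- Apply the local map of kind `κ` to a function of the replaced states. -/
def app (κ : Kind) (a b : St) (f : List St → K) : K :=
  ((coef κ a b).map fun t => t.1 * f t.2).sum

/-- `x` is the image of the tensor `x'` under the local map of kind `κ`, placed with `k` factors to
its left and `l` factors to its right. Only coefficients of the correct length are constrained. -/
def Rel (k l : ℕ) (κ : Kind) (x x' : List St → K) : Prop :=
  ∀ P a b R, P.length = k → R.length = l →
    x (P ++ a :: b :: R) = app κ a b fun t => x' (P ++ t ++ R)

/-- `Run n W x`: some complete execution with `n` steps from the word `W` has web tensor `x`. -/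
inductive Run : ℕ → List Letter → (List St → K) → Prop where
  | nil (x : List St → K) (hx : x [] = 1) : Run 0 [] x
  | step (A B : List Letter) (p q : Letter) (o : List Letter) (κ : Kind) (n : ℕ)
      (x x' : List St → K) (hr : Rule κ p q o) (hx : Rel A.length B.length κ x x')
      (h : Run n (A ++ o ++ B) x') : Run (n + 1) (A ++ p :: q :: B) x

theorem Rule.length {κ : Kind} {p q : Letter} {o : List Letter} (h : Rule κ p q o) :
    o.length = κ.out := by
  cases h <;> rfl

theorem coef_length (κ : Kind) (a b : St) : ∀ t ∈ coef κ a b, t.2.length = κ.out := by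
  cases κ <;> cases a <;> cases b <;> simp [coef, Kind.out]

theorem Rule.unique {κ κ' : Kind} {p q : Letter} {o o' : List Letter} (h : Rule κ p q o)
    (h' : Rule κ' p q o') : κ = κ' ∧ o = o' := by
  obtain ⟨s, i⟩ := p
  obtain ⟨s', i'⟩ := q
  cases h with
  | u => cases s <;> cases h' <;> simp_all <;> rename_i hp <;> cases hp
  | y _ hp =>
    cases s <;> cases h' <;> rename_i hp' <;> cases hp <;> cases hp' <;> simp
  | h _ hp =>
    cases s <;> cases h' <;> rename_i hp' <;> cases hp <;> cases hp' <;> simp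

theorem app_congr (κ : Kind) (a b : St) {f g : List St → K}
    (h : ∀ t, t.length = κ.out → f t = g t) : app κ a b f = app κ a b g := by
  unfold app
  congr 1
  refine List.map_congr_left fun t ht => ?_
  rw [h _ (coef_length κ a b t ht)]

theorem app_comm (κ κ' : Kind) (a b c d : St) (F : List St → List St → K) :
    (app κ a b fun t => app κ' c d fun u => F t u) =
      app κ' c d fun u => app κ a b fun t => F t u := by
  unfold app
  induction coef κ a b with
  | nil => simp
  | cons t T ih =>
    simp only [List.map_cons, List.sum_cons, ih]
    induction coef κ' c d with
    | nil => simp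
    | cons u U ih' =>
      simp only [List.map_cons, List.sum_cons] at ih' ⊢
      linear_combination ih'

/-- The image of a tensor under a local map exists. -/
theorem exists_rel (k l : ℕ) (κ : Kind) (x' : List St → K) : ∃ x, Rel k l κ x x' := by
  refine ⟨fun L => match L.drop k with
    | a :: b :: R => app κ a b fun t => x' (L.take k ++ t ++ R)
    | _ => 0, ?_⟩
  intro P a b R hP hR
  subst hP
  simp

/-! ### Exchanging the order of rules -/

theorem split_at {α : Type*} (k m : ℕ) (P : List α) (h : P.length = k + (m + 2)) :
    ∃ P0 c d P1, P = P0 ++ c :: d :: P1 ∧ P0.length = k ∧ P1.length = m := by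
  have h2 : (P.drop k).length = m + 2 := by simp [h]
  match hd : P.drop k, h2 with
  | c :: d :: P1, h2 =>
    refine ⟨P.take k, c, d, P1, ?_, by simp [h], by simpa using h2⟩
    rw [← hd, List.take_append_drop]

/-- Rules at disjoint positions commute; the left one was applied first. -/
theorem rel_disjoint_left {k m l : ℕ} {κ κ' : Kind} {x x1 x' x3 : List St → K}
    (h1 : Rel k (m + 2 + l) κ x x1) (h2 : Rel (k + κ.out + m) l κ' x1 x3)
    (h3 : Rel k (m + κ'.out + l) κ x' x3) : Rel (k + 2 + m) l κ' x x' := by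
  intro P a b R hP hR
  obtain ⟨P0, c, d, P1, rfl, hP0, hP1⟩ := split_at k m P (by omega)
  have e1 := h1 P0 c d (P1 ++ a :: b :: R) hP0 (by simp; omega)
  have e2 : (app κ c d fun t => x1 (P0 ++ t ++ (P1 ++ a :: b :: R))) =
      app κ c d fun t => app κ' a b fun u => x3 (P0 ++ t ++ P1 ++ u ++ R) := by
    refine app_congr κ c d fun t ht => ?_
    have := h2 (P0 ++ t ++ P1) a b R (by simp; omega) hR
    simpa using this
  have e3 : (app κ' a b fun u => x' (P0 ++ c :: d :: P1 ++ u ++ R)) =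
      app κ' a b fun u => app κ c d fun t => x3 (P0 ++ t ++ P1 ++ u ++ R) := by
    refine app_congr κ' a b fun u hu => ?_
    have := h3 P0 c d (P1 ++ u ++ R) hP0 (by simp; omega)
    simpa using this
  rw [e3, app_comm, ← e2, ← e1]
  simp

/-- Rules at disjoint positions commute; the right one was applied first. -/
theorem rel_disjoint_right {k m l : ℕ} {κ κ' : Kind} {x x1 x' x3 : List St → K}
    (h1 : Rel (k + 2 + m) l κ' x x1) (h2 : Rel k (m + κ'.out + l) κ x1 x3)
    (h3 : Rel (k + κ.out + m) l κ' x' x3) : Rel k (m + 2 + l) κ x x' := by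
  intro P c d R' hP hR'
  obtain ⟨P1, a, b, R, rfl, hP1, hR⟩ := split_at m l R' (by omega)
  have e1 := h1 (P ++ c :: d :: P1) a b R (by simp; omega) hR
  have e2 : (app κ' a b fun u => x1 (P ++ c :: d :: P1 ++ u ++ R)) =
      app κ' a b fun u => app κ c d fun t => x3 (P ++ t ++ P1 ++ u ++ R) := by
    refine app_congr κ' a b fun u hu => ?_
    have := h2 P c d (P1 ++ u ++ R) hP (by simp; omega)
    simpa using this
  have e3 : (app κ c d fun t => x' (P ++ t ++ (P1 ++ a :: b :: R))) =
      app κ c d fun t => app κ' a b fun u => x3 (P ++ t ++ P1 ++ u ++ R) := by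
    refine app_congr κ c d fun t ht => ?_
    have := h3 (P ++ t ++ P1) a b R (by simp; omega) hR
    simpa using this
  rw [e3, app_comm, ← e2, ← e1]
  simp

theorem v_ne_zero : v ≠ 0 := RatFunc.X_ne_zero

/-- The tensor identity closing an overlap: expanding three adjacent output factors with `κ` on the
first two and continuing with `x1` agrees with expanding them with `κ'` on the last two and
continuing with `x'`. -/
def Agree (k l : ℕ) (κ κ' : Kind) (x1 x' : List St → K) : Prop :=
  ∀ P a b c R, P.length = k → R.length = l →
    (app κ a b fun t => x1 (P ++ t ++ c :: R)) = app κ' b c fun u => x' (P ++ a :: u ++ R)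

theorem agree_yy {k l : ℕ} {x1 x' x3 : List St → K} (h2 : Rel k l .u x1 x3)
    (h3 : Rel k l .u x' x3) : Agree k l .y .y x1 x' := by
  intro P a b c R hP hR
  have e2 : ∀ a b, x1 (P ++ a :: b :: R) = _ := fun a b => h2 P a b R hP hR
  have e3 : ∀ a b, x' (P ++ a :: b :: R) = _ := fun a b => h3 P a b R hP hR
  cases a <;> cases b <;> cases c <;> simp [app, coef, e2, e3] <;> ring

theorem agree_yh {k l : ℕ} {x1 x' x3 : List St → K} (h2 : Rel k l .y x1 x3)
    (h3 : Rel k (l + 1) .u x' x3) : Agree k l .y .h x1 x' := by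
  intro P a b c R hP hR
  have e2 : ∀ a b, x1 (P ++ a :: b :: R) = _ := fun a b => h2 P a b R hP hR
  have e3 : ∀ a b c, x' (P ++ a :: b :: c :: R) = _ :=
    fun a b c => h3 P a b (c :: R) hP (by simp [hR])
  have hv := v_ne_zero
  cases a <;> cases b <;> cases c <;> simp [app, coef, e2, e3] <;> field_simp

theorem agree_hy {k l : ℕ} {x1 x' x3 : List St → K} (h2 : Rel (k + 1) l .u x1 x3)
    (h3 : Rel k l .y x' x3) : Agree k l .h .y x1 x' := by
  intro P a b c R hP hR
  have e2 : ∀ a b c, x1 (P ++ a :: b :: c :: R) = app .u b c fun t => x3 (P ++ a :: (t ++ R)) := by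
    intro a b c
    simpa using h2 (P ++ [a]) b c R (by simp [hP]) hR
  have e3 : ∀ a b, x' (P ++ a :: b :: R) = _ := fun a b => h3 P a b R hP hR
  have hv := v_ne_zero
  cases a <;> cases b <;> cases c <;> simp [app, coef, e2, e3] <;> field_simp

theorem agree_hh {k l : ℕ} {x1 x' x3 : List St → K} (h2 : Rel (k + 1) l .y x1 x3)
    (h3 : Rel k (l + 1) .y x' x3) : Agree k l .h .h x1 x' := by
  intro P a b c R hP hR
  have e2 : ∀ a b c, x1 (P ++ a :: b :: c :: R) = app .y b c fun t => x3 (P ++ a :: (t ++ R)) := by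
    intro a b c
    simpa using h2 (P ++ [a]) b c R (by simp [hP]) hR
  have e3 : ∀ a b c, x' (P ++ a :: b :: c :: R) = _ :=
    fun a b c => h3 P a b (c :: R) hP (by simp [hR])
  have hv := v_ne_zero
  cases a <;> cases b <;> cases c <;> simp [app, coef, e2, e3] <;> field_simp

/-- Two rules overlapping in one letter can be joined: after either of them, one further rule leads
to a common word, and the resulting tensors agree. No overlap involves a U-rule. -/
theorem overlap {κ κ' : Kind} {p q r : Letter} {o o' : List Letter} (h : Rule κ p q o)
    (h' : Rule κ' q r o') :
    ∃ C c d D κ2 t C' c' d' D' κ3 t', o ++ [r] = C ++ c :: d :: D ∧ Rule κ2 c d t ∧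
      p :: o' = C' ++ c' :: d' :: D' ∧ Rule κ3 c' d' t' ∧ C ++ t ++ D = C' ++ t' ++ D' ∧
      ∀ k l x1 x' x3, Rel (k + C.length) (D.length + l) κ2 x1 x3 →
        Rel (k + C'.length) (D'.length + l) κ3 x' x3 → Agree k l κ κ' x1 x' := by
  obtain ⟨s1, j1⟩ := p
  obtain ⟨s2, j2⟩ := q
  obtain ⟨s3, j3⟩ := r
  cases h with
  | u => cases h' <;> rename_i hp <;> cases hp
  | y _ hp =>
    cases h' with
    | u => cases hp
    | y _ hp' =>
      cases hp <;> cases hp'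
      exact ⟨[], _, _, [], _, _, [], _, _, [], _, _, rfl,
        by simpa using Rule.u (!s1), rfl, Rule.u s1, rfl,
        fun k l x1 x' x3 h2 h3 => agree_yy (by simpa using h2) (by simpa using h3)⟩
    | h _ hp' =>
      have fin : ∀ k l x1 x' x3, Rel (k + 0) (0 + l) .y x1 x3 →
          Rel (k + 0) (1 + l) .u x' x3 → Agree k l .y .h x1 x' := fun k l x1 x' x3 h2 h3 =>
        agree_yh (by simpa using h2) (by simpa [add_comm] using h3)
      cases hp <;> cases hp'
      · exact ⟨[], _, _, [], _, _, [], _, _, [_], _, _, rfl, Rule.y (!s1) YPat.y1, rfl, Rule.u s1,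
          by simp, fin⟩
      · exact ⟨[], _, _, [], _, _, [], _, _, [_], _, _, rfl, Rule.y (!s1) YPat.y2, rfl, Rule.u s1,
          by simp, fin⟩
  | h _ hp =>
    cases h' with
    | u => cases hp
    | y _ hp' =>
      have fin : ∀ k l x1 x' x3, Rel (k + 1) (0 + l) .u x1 x3 →
          Rel (k + 0) (0 + l) .y x' x3 → Agree k l .h .y x1 x' := fun k l x1 x' x3 h2 h3 =>
        agree_hy (by simpa using h2) (by simpa using h3)
      cases hp <;> cases hp'
      · exact ⟨[_], _, _, [], _, _, [], _, _, [], _, _, rfl, Rule.u s1, rfl,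
          by simpa using Rule.y s1 YPat.y2, by simp, fin⟩
      · exact ⟨[_], _, _, [], _, _, [], _, _, [], _, _, rfl, Rule.u s1, rfl,
          by simpa using Rule.y s1 YPat.y3, by simp, fin⟩
    | h _ hp' =>
      have fin : ∀ k l x1 x' x3, Rel (k + 1) (0 + l) .y x1 x3 →
          Rel (k + 0) (1 + l) .y x' x3 → Agree k l .h .h x1 x' := fun k l x1 x' x3 h2 h3 =>
        agree_hh (by simpa using h2) (by simpa [add_comm] using h3)
      cases hp <;> cases hp'
      · exact ⟨[_], _, _, [], _, _, [], _, _, [_], _, _, rfl,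
          by simpa using Rule.y s1 YPat.y1, rfl, by simpa using Rule.y s1 YPat.y2, by simp, fin⟩
      · exact ⟨[_], _, _, [], _, _, [], _, _, [_], _, _, rfl,
          by simpa using Rule.y s1 YPat.y2, rfl, by simpa using Rule.y s1 YPat.y2, by simp, fin⟩
      · exact ⟨[_], _, _, [], _, _, [], _, _, [_], _, _, rfl,
          by simpa using Rule.y s1 YPat.y1, rfl, by simpa using Rule.y s1 YPat.y3, by simp, fin⟩
      · exact ⟨[_], _, _, [], _, _, [], _, _, [_], _, _, rfl,
          by simpa using Rule.y s1 YPat.y2, rfl, by simpa using Rule.y s1 YPat.y3, by simp, fin⟩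

/-- The web tensor of an execution can be computed starting with any applicable rule. -/
theorem exchange (n : ℕ) : ∀ W x, Run n W x → ∀ A B p q o κ, W = A ++ p :: q :: B →
    Rule κ p q o → ∃ x' m, n = m + 1 ∧ Run m (A ++ o ++ B) x' ∧ Rel A.length B.length κ x x' := by
  induction n with
  | zero =>
    intro W x hW A B p q o κ hWA
    cases hW
    simp at hWA
  | succ n ih =>
    intro W x hW A B p q o κ hWA hr
    cases hW with
    | step A1 B1 p1 q1 o1 κ1 _ _ x1 hr1 hx1 hrun =>
    rw [List.append_eq_append_iff] at hWA
    rcases hWA with ⟨C, hA, hX⟩ | ⟨C, hA, hX⟩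
    · match C, hA, hX with
      | [], hA, hX =>
        simp only [List.append_nil, List.nil_append, List.cons.injEq] at hA hX
        obtain ⟨rfl, rfl, rfl⟩ := hX
        subst hA
        obtain ⟨rfl, rfl⟩ := hr.unique hr1
        exact ⟨x1, n, rfl, hrun, hx1⟩
      | [c], hA, hX =>
        simp only [List.cons_append, List.nil_append, List.cons.injEq] at hX
        obtain ⟨rfl, rfl, rfl⟩ := hX
        subst hA
        obtain ⟨C, c, d, D, κ2, t, C', c', d', D', κ3, t', hC, hr2, hC', hr3, ht, hag⟩ :=
          overlap hr1 hr
        have hw : A1 ++ o1 ++ q :: B = (A1 ++ C) ++ c :: d :: (D ++ B) := by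
          have := congrArg (fun z => A1 ++ z ++ B) hC
          simpa using this
        obtain ⟨x3, m, hm, hrun3, hx3⟩ := ih _ _ hrun _ _ _ _ _ _ hw hr2
        obtain ⟨x', hx'⟩ := exists_rel (A1 ++ C').length (D' ++ B).length κ3 x3
        have hw3 : A1 ++ C ++ t ++ (D ++ B) = A1 ++ C' ++ t' ++ (D' ++ B) := by
          have := congrArg (fun z => A1 ++ z ++ B) ht
          simpa using this
        have hw' : A1 ++ [p1] ++ o ++ B = (A1 ++ C') ++ c' :: d' :: (D' ++ B) := by
          have := congrArg (fun z => A1 ++ z ++ B) hC'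
          simpa using this
        refine ⟨x', n, rfl, ?_, ?_⟩
        · rw [hw', hm]
          exact Run.step _ _ _ _ _ _ _ _ _ hr3 hx' (hw3 ▸ hrun3)
        · intro P' a b R hP' hR
          obtain ⟨P, e, rfl⟩ : ∃ P e, P' = P ++ [e] := by
            rcases List.eq_nil_or_concat P' with h | ⟨P, e, h⟩
            · subst h; simp at hP'
            · exact ⟨P, e, by simpa using h⟩
          have hP : P.length = A1.length := by simpa using hP'
          have h1 := hx1 P e a (b :: R) hP (by simp [hR])
          have h2 := hag A1.length B.length x1 x' x3 (by simpa using hx3) (by simpa using hx')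
            P e a b R hP hR
          simp only [List.append_assoc, List.cons_append, List.nil_append] at h1 h2 ⊢
          rw [h1, h2]
      | c :: d :: C, hA, hX =>
        simp only [List.cons_append, List.cons.injEq] at hX
        obtain ⟨rfl, rfl, rfl⟩ := hX
        subst hA
        obtain ⟨x3, m, hm, hrun3, hx3⟩ :=
          ih _ _ hrun (A1 ++ o1 ++ C) B p q o κ (by simp) hr
        obtain ⟨x', hx'⟩ := exists_rel A1.length (C ++ o ++ B).length κ1 x3
        refine ⟨x', n, rfl, ?_, ?_⟩
        · have := Run.step A1 (C ++ o ++ B) p1 q1 o1 κ1 m x' x3 hr1 hx' (by simpa using hrun3)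
          rw [hm]
          simpa using this
        · have l1 := hr.length
          have l2 := hr1.length
          have := rel_disjoint_left (k := A1.length) (m := C.length) (l := B.length)
            (κ := κ1) (κ' := κ) (x := x) (x1 := x1) (x' := x') (x3 := x3)
            (by convert hx1 using 1; simp; omega) (by convert hx3 using 1; simp; omega)
            (by convert hx' using 1; simp; omega)
          convert this using 1
          simp; omega
    · match C, hA, hX with
      | [], hA, hX =>
        simp only [List.append_nil, List.nil_append, List.cons.injEq] at hA hX
        obtain ⟨rfl, rfl, rfl⟩ := hX
        subst hA
        obtain ⟨rfl, rfl⟩ := hr.unique hr1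
        exact ⟨x1, n, rfl, hrun, hx1⟩
      | [c], hA, hX =>
        simp only [List.cons_append, List.nil_append, List.cons.injEq] at hX
        obtain ⟨rfl, rfl, rfl⟩ := hX
        subst hA
        obtain ⟨C', c', d', D', κ3, t', C, c, d, D, κ2, t, hC', hr3, hC, hr2, ht, hag⟩ :=
          overlap hr hr1
        have hw : A ++ [p] ++ o1 ++ B1 = (A ++ C) ++ c :: d :: (D ++ B1) := by
          have := congrArg (fun z => A ++ z ++ B1) hC
          simpa using this
        obtain ⟨x3, m, hm, hrun3, hx3⟩ := ih _ _ hrun _ _ _ _ _ _ hw hr2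
        obtain ⟨x', hx'⟩ := exists_rel (A ++ C').length (D' ++ B1).length κ3 x3
        have hw3 : A ++ C ++ t ++ (D ++ B1) = A ++ C' ++ t' ++ (D' ++ B1) := by
          have := congrArg (fun z => A ++ z ++ B1) ht.symm
          simpa using this
        have hw' : A ++ o ++ q1 :: B1 = (A ++ C') ++ c' :: d' :: (D' ++ B1) := by
          have := congrArg (fun z => A ++ z ++ B1) hC'
          simpa using this
        refine ⟨x', n, rfl, ?_, ?_⟩
        · rw [hw', hm]
          exact Run.step _ _ _ _ _ _ _ _ _ hr3 hx' (hw3 ▸ hrun3)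
        · intro P a b R' hP hR'
          match R', hR' with
          | e :: R, hR' =>
          have hR : R.length = B1.length := by simpa using hR'
          have h1 := hx1 (P ++ [a]) b e R (by simp [hP]) hR
          have h2 := hag A.length B1.length x' x1 x3 (by simpa using hx') (by simpa using hx3)
            P a b e R hP hR
          simp only [List.append_assoc, List.cons_append, List.nil_append] at h1 h2 ⊢
          rw [h1, h2]
      | c :: d :: C, hA, hX =>
        simp only [List.cons_append, List.cons.injEq] at hX
        obtain ⟨rfl, rfl, rfl⟩ := hX
        subst hA
        obtain ⟨x3, m, hm, hrun3, hx3⟩ :=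
          ih _ _ hrun A (C ++ o1 ++ B1) p q o κ (by simp) hr
        obtain ⟨x', hx'⟩ := exists_rel (A ++ o ++ C).length B1.length κ1 x3
        refine ⟨x', n, rfl, ?_, ?_⟩
        · have := Run.step (A ++ o ++ C) B1 p1 q1 o1 κ1 m x' x3 hr1 hx' (by simpa using hrun3)
          rw [hm]
          simpa using this
        · have l1 := hr.length
          have l2 := hr1.length
          have := rel_disjoint_right (k := A.length) (m := C.length) (l := B1.length)
            (κ := κ) (κ' := κ1) (x := x) (x1 := x1) (x' := x') (x3 := x3)
            (by convert hx1 using 1; simp; omega) (by convert hx3 using 1; simp; omega)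
            (by convert hx' using 1; simp; omega)
          convert this using 1
          simp; omega

/-! ### Triangularity -/

/-- The states of a word. -/
abbrev states (W : List Letter) : List St := W.map Prod.snd

/-- `LexGt L J`: at the first position where they differ, `L` has the larger state. -/
def LexGt : List St → List St → Prop
  | a :: L, b :: J => stLt b a ∨ (a = b ∧ LexGt L J)
  | _, _ => False

theorem lexGt_append {P Q L J : List St} (h : P.length = Q.length) :
    LexGt (P ++ L) (Q ++ J) ↔ LexGt P Q ∨ (P = Q ∧ LexGt L J) := by
  induction P generalizing Q with
  | nil =>
    obtain rfl : Q = [] := by simpa using h.symm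
    simp [LexGt]
  | cons a P ih =>
    match Q, h with
    | b :: Q, h =>
      simp only [List.cons_append, LexGt, ih (Q := Q) (by simpa using h), List.cons.injEq]
      tauto

/-- Local form of triangularity: rules do not decrease an excess over the leading states. -/
theorem lexGt_local {κ : Kind} {p q : Letter} {o : List Letter} (hr : Rule κ p q o) (a b : St)
    (R R' : List St) (h : LexGt (a :: b :: R) (p.2 :: q.2 :: R')) :
    ∀ t ∈ coef κ a b, LexGt (t.2 ++ R) (states o ++ R') := by
  cases hr with
  | u => cases a <;> cases b <;> simp_all [coef, LexGt, stLt, stval]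
  | y _ hp => cases hp <;> cases a <;> cases b <;> simp_all [coef, LexGt, stLt, stval]
  | h _ hp => cases hp <;> cases a <;> cases b <;> simp_all [coef, LexGt, stLt, stval]

/-- Web tensors are supported on state strings that are lexicographically at most the leading
one. -/
theorem Run.triangular {n : ℕ} {W : List Letter} {x : List St → K} (h : Run n W x) :
    ∀ L, L.length = W.length → LexGt L (states W) → x L = 0 := by
  induction h with
  | nil x hx =>
    intro L hL hgt
    cases L <;> simp [LexGt] at hgt
  | step A B p q o κ n x x' hr hx _ ih =>
    intro L hL hgt
    obtain ⟨P, a, b, R, rfl, hP, hR⟩ := split_at A.length B.length L (by simpa using hL)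
    rw [hx P a b R hP hR]
    have hl := hr.length
    refine List.sum_eq_zero fun z hz => ?_
    obtain ⟨t, ht, rfl⟩ := List.mem_map.1 hz
    have hlt := coef_length κ a b t ht
    have : x' (P ++ t.2 ++ R) = 0 := by
      refine ih _ (by simp; omega) ?_
      simp only [states, List.map_append, List.map_cons, List.append_assoc] at hgt ⊢
      rw [lexGt_append (by simpa using hP)] at hgt ⊢
      exact hgt.imp_right fun hg => ⟨hg.1, lexGt_local hr a b R _ hg.2 t ht⟩
    simp only [this, mul_zero]

/-! ### The negative-exponent property along the rules -/

theorem inZInv_of_zeroConst {c : K} : ZeroConst c → InZInv c := by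
  rintro ⟨p, -, rfl⟩
  exact ⟨p, rfl⟩

theorem inZInv_one : InZInv 1 := ⟨1, by simp⟩

theorem zeroConst_zero : ZeroConst 0 := ⟨0, by simp, by simp⟩

theorem zeroConst_add {c d : K} : ZeroConst c → ZeroConst d → ZeroConst (c + d) := by
  rintro ⟨p, hp, rfl⟩ ⟨r, hr, rfl⟩
  exact ⟨p + r, by simp [hp, hr], by simp⟩

theorem zeroConst_inv_mul {c : K} : InZInv c → ZeroConst (v⁻¹ * c) := by
  rintro ⟨p, rfl⟩
  exact ⟨Polynomial.X * p, by simp, by simp⟩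

/-- The negative-exponent property of `x` relative to the states of `W`. -/
def NE (W : List Letter) (x : List St → K) : Prop :=
  x (states W) = 1 ∧ ∀ L, L.length = W.length → L ≠ states W → ZeroConst (x L)

theorem NE.inZInv {W : List Letter} {x : List St → K} (h : NE W x) {L : List St}
    (hL : L.length = W.length) : InZInv (x L) := by
  by_cases e : L = states W
  · rw [e, h.1]; exact inZInv_one
  · exact inZInv_of_zeroConst (h.2 L hL e)

theorem NE.zeroConst {A B o : List Letter} {x : List St → K} (h : NE (A ++ o ++ B) x)
    {P t R : List St} (hP : P.length = A.length) (hR : R.length = B.length)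
    (ht : t.length = o.length) (hne : t = states o → P = states A → R ≠ states B) :
    ZeroConst (x (P ++ t ++ R)) := by
  refine h.2 _ (by simp [hP, hR, ht]) fun e => ?_
  simp only [states, List.map_append, List.append_assoc] at e
  obtain ⟨h1, h2⟩ := List.append_inj e (by simp [hP])
  obtain ⟨h3, h4⟩ := List.append_inj h2 (by simp [ht])
  exact hne h3 h1 h4

/-- U- and Y-rules preserve the negative-exponent property: their matrix entries lie in `ℤ[v⁻¹]`,
and the only entry with a constant term whose input matches the leading states has the leading
states as output. -/
theorem NE.uy {A B o : List Letter} {p q : Letter} {κ : Kind} {x x' : List St → K}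
    (hr : Rule κ p q o) (hκ : κ ≠ .h) (hx : Rel A.length B.length κ x x')
    (h : NE (A ++ o ++ B) x') : NE (A ++ p :: q :: B) x := by
  constructor
  · have e := hx (states A) p.2 q.2 (states B) (by simp) (by simp)
    have h1 := h.1
    simp only [states, List.map_append, List.map_cons] at e h1 ⊢
    rw [e]
    cases hr with
    | u => simpa [app, coef] using h1
    | y _ hp => cases hp <;> simpa [app, coef] using h1
    | h => exact absurd rfl hκ
  · intro L hL hne
    obtain ⟨P, a, b, R, rfl, hP, hR⟩ := split_at A.length B.length L (by simpa using hL)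
    have hne' : a = p.2 → b = q.2 → P = states A → R ≠ states B := by
      rintro rfl rfl rfl rfl
      exact hne (by simp)
    rw [hx P a b R hP hR]
    have hz : ∀ t : List St, t.length = o.length →
        (t = states o → P = states A → R ≠ states B) → ZeroConst (x' (P ++ t ++ R)) :=
      fun t ht => h.zeroConst hP hR ht
    have hq : ∀ t : List St, t.length = o.length → ZeroConst (v⁻¹ * x' (P ++ t ++ R)) :=
      fun t ht => zeroConst_inv_mul (h.inZInv (by simp [hP, hR, ht]))
    have z := zeroConst_zero
    cases hr with
    | u =>
      have z0 := hz [] rfl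
      have q0 := hq [] rfl
      have q1 := zeroConst_inv_mul (inZInv_of_zeroConst q0)
      simp only [List.append_nil] at z0 q0 q1
      cases a <;> cases b <;> simp only [app, coef, pow_two, mul_assoc, List.map_cons, one_mul,
        List.map_nil, List.sum_cons, List.sum_nil, add_zero, List.append_nil] <;>
        first | exact z | exact q0 | exact q1 | exact z0 fun _ => hne' rfl rfl
    | y s hp =>
      have z0 := fun c => hz [c] rfl
      have q0 := fun c => hq [c] rfl
      cases hp <;> cases a <;> cases b <;> simp only [app, coef, List.map_cons, one_mul,
        List.map_nil, List.sum_cons, List.sum_nil, add_zero] <;>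
        first
        | exact z
        | exact q0 _
        | exact z0 _ fun _ => hne' rfl rfl
        | exact z0 _ fun e => by simp at e
    | h => exact absurd rfl hκ

/-- An H-rule preserves the negative-exponent property as soon as multiplication by `v` leaves the
coefficients at `(1, -1)` in `v⁻¹ℤ[v⁻¹]`: this is the only matrix entry with a positive exponent.
Triangularity is needed for the leading coefficient of the rule `(0, 0) → (-1, 1)`. -/
theorem NE.h {n : ℕ} {A B o : List Letter} {p q : Letter} {x x' : List St → K}
    (hr : Rule .h p q o) (hx : Rel A.length B.length .h x x') (h : NE (A ++ o ++ B) x')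
    (hrun : Run n (A ++ o ++ B) x')
    (hv : ∀ P R, P.length = A.length → R.length = B.length →
      ZeroConst (v * x' (P ++ [.pos, .neg] ++ R))) : NE (A ++ p :: q :: B) x := by
  constructor
  · have e := hx (states A) p.2 q.2 (states B) (by simp) (by simp)
    have h1 := h.1
    have htri := hrun.triangular (states A ++ [.pos, .neg] ++ states B)
      (by simp [hr.length, Kind.out]; omega)
    simp only [states, List.map_append, List.map_cons, List.append_assoc] at e h1 htri ⊢
    rw [lexGt_append rfl] at htri
    rw [e]
    cases hr with
    | h _ hp =>
      cases hp with
      | h2 =>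
        have := htri (Or.inr ⟨rfl, by simp [LexGt, stLt, stval]⟩)
        simp at this h1
        simp [app, coef, this, h1]
      | _ => simpa [app, coef] using h1
  · intro L hL hne
    obtain ⟨P, a, b, R, rfl, hP, hR⟩ := split_at A.length B.length L (by simpa using hL)
    have hne' : a = p.2 → b = q.2 → P = states A → R ≠ states B := by
      rintro rfl rfl rfl rfl
      exact hne (by simp)
    rw [hx P a b R hP hR]
    have z0 : ∀ c d : St, ([c, d] = states o → P = states A → R ≠ states B) →
        ZeroConst (x' (P ++ [c, d] ++ R)) :=
      fun c d => h.zeroConst hP hR (by simp [hr.length, Kind.out])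
    have q0 : ∀ c d : St, ZeroConst (v⁻¹ * x' (P ++ [c, d] ++ R)) :=
      fun c d => zeroConst_inv_mul (h.inZInv (by simp [hP, hR, hr.length, Kind.out]; omega))
    have w := hv P R hP hR
    cases hr with
    | h _ hp =>
      cases hp <;> cases a <;> cases b <;> simp only [app, coef, List.map_cons, one_mul,
        List.map_nil, List.sum_cons, List.sum_nil, add_zero] <;>
        first
        | exact z0 _ _ fun _ => hne' rfl rfl
        | exact z0 _ _ fun e => by simp at e
        | exact zeroConst_add w (z0 _ _ fun e => by simp at e)
        | exact zeroConst_add (z0 _ _ fun e => by simp at e) (z0 _ _ fun _ => hne' rfl rfl)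
        | exact zeroConst_add (z0 _ _ fun e => by simp at e) (z0 _ _ fun e => by simp at e)
        | exact zeroConst_add (z0 _ _ fun e => by simp at e) (q0 _ _)

theorem v_mul_inv_mul (c : K) : v * (v⁻¹ * c) = c := mul_inv_cancel_left₀ v_ne_zero c

/-- An H-rule followed by a U- or Y-rule overlapping it on the right. Writing `(a, b, c)` for the
three output states, the coefficients at `(1, -1, c)` acquire a factor `v⁻¹` from the second rule,
which cancels the `v` of the H-rule. -/
theorem NE.h_right {n : ℕ} {A B o : List Letter} {p q r p' q' : Letter} {κ : Kind}
    {x x' x'' : List St → K} (hr : Rule .h p q [p', q']) (hr' : Rule κ q' r o) (hκ : κ ≠ .h)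
    (hx : Rel A.length (B.length + 1) .h x x') (hx' : Rel (A.length + 1) B.length κ x' x'')
    (hrun : Run n (A ++ p' :: q' :: r :: B) x') (h : NE (A ++ p' :: (o ++ B)) x'') :
    NE (A ++ p :: q :: r :: B) x := by
  have h' : NE (A ++ p' :: q' :: r :: B) x' := by
    have := NE.uy (A := A ++ [p']) (B := B) hr' hκ (by simpa using hx') (by simpa using h)
    simpa using this
  refine NE.h (A := A) (B := r :: B) hr (by simpa using hx) (by simpa using h')
    (by simpa using hrun) fun P R' hP hR' => ?_
  match R', hR' with
  | b :: R, hR' =>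
  have hR : R.length = B.length := by simpa using hR'
  have e := hx' (P ++ [.pos]) .neg b R (by simp [hP]) hR
  have hq : ∀ t : List St, t.length = o.length → InZInv (x'' (P ++ [.pos] ++ t ++ R)) :=
    fun t ht => h.inZInv (by simp [hP, hR, ht])
  have hz : ∀ t : List St, t.length = o.length → ZeroConst (x'' (P ++ [.pos] ++ t ++ R)) := by
    intro t ht
    have := NE.zeroConst (A := A) (o := p' :: o) (B := B) (x := x'') (P := P) (t := .pos :: t)
      (R := R) (by simpa using h) hP hR (by simp [ht]) (fun e => by
        cases hr with
        | h _ hp => cases hp <;> simp at e)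
    simpa using this
  have e' : x' (P ++ [.pos, .neg] ++ b :: R) = x' (P ++ [.pos] ++ .neg :: b :: R) := by simp
  rw [e', e]
  have z := zeroConst_zero
  cases hr' with
  | u =>
    have := zeroConst_inv_mul (hq [] rfl)
    cases b <;> simp only [app, coef, pow_two, mul_assoc, List.map_cons, mul_zero, v_mul_inv_mul,
      List.map_nil, List.sum_cons, List.sum_nil, add_zero] <;> first | exact z | exact this
  | y _ hp =>
    have := fun c => hz [c] rfl
    cases b <;> simp only [app, coef, List.map_cons, mul_zero, v_mul_inv_mul,
      List.map_nil, List.sum_cons, List.sum_nil, add_zero] <;> first | exact z | exact this _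
  | h => exact absurd rfl hκ

/-- An H-rule followed by a U- or Y-rule overlapping it on the left. -/
theorem NE.h_left {n : ℕ} {A B o : List Letter} {p q r q' r' : Letter} {κ : Kind}
    {x x' x'' : List St → K} (hr : Rule .h q r [q', r']) (hr' : Rule κ p q' o) (hκ : κ ≠ .h)
    (hx : Rel (A.length + 1) B.length .h x x') (hx' : Rel A.length (B.length + 1) κ x' x'')
    (hrun : Run n (A ++ p :: q' :: r' :: B) x') (h : NE (A ++ (o ++ r' :: B)) x'') :
    NE (A ++ p :: q :: r :: B) x := by
  have h' : NE (A ++ p :: q' :: r' :: B) x' :=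
    NE.uy (A := A) (B := r' :: B) hr' hκ (by simpa using hx') (by simpa using h)
  have goal : NE ((A ++ [p]) ++ q :: r :: B) x := by
    refine NE.h (A := A ++ [p]) (B := B) hr (by simpa using hx) (by simpa using h')
      (by simpa using hrun) fun P' R hP' hR => ?_
    obtain ⟨P, a, rfl⟩ : ∃ P a, P' = P ++ [a] := by
      rcases List.eq_nil_or_concat P' with h | ⟨P, e, h⟩
      · subst h; simp at hP'
      · exact ⟨P, e, by simpa using h⟩
    have hP : P.length = A.length := by simpa using hP'
    have e := hx' P a .pos (.neg :: R) hP (by simp [hR])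
    have hq : ∀ t : List St, t.length = o.length → InZInv (x'' (P ++ t ++ .neg :: R)) :=
      fun t ht => h.inZInv (by simp [hP, hR, ht])
    have hz : ∀ t : List St, t.length = o.length → ZeroConst (x'' (P ++ t ++ .neg :: R)) := by
      intro t ht
      have := NE.zeroConst (A := A) (o := o ++ [r']) (B := B) (x := x'') (P := P)
        (t := t ++ [.neg]) (R := R) (by simpa using h) hP hR (by simp [ht]) (fun e => by
          simp only [states, List.map_append] at e
          have e2 := (List.append_inj e (by simp [ht])).2
          cases hr with
          | h _ hp => cases hp <;> simp at e2)
      simpa using this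
    have e' : x' (P ++ [a] ++ [.pos, .neg] ++ R) = x' (P ++ a :: .pos :: .neg :: R) := by simp
    rw [e', e]
    have z := zeroConst_zero
    cases hr' with
    | u =>
      have := zeroConst_inv_mul (hq [] rfl)
      cases a <;> simp only [app, coef, pow_two, mul_assoc, List.map_cons, mul_zero, v_mul_inv_mul,
        List.map_nil, List.sum_cons, List.sum_nil, add_zero] <;> first | exact z | exact this
    | y _ hp =>
      have := fun c => hz [c] rfl
      cases a <;> simp only [app, coef, List.map_cons, mul_zero, v_mul_inv_mul,
        List.map_nil, List.sum_cons, List.sum_nil, add_zero] <;> first | exact z | exact this _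
    | h => exact absurd rfl hκ
  simpa using goal

/-! ### Reducible words -/

/-- A word is reducible if a U- or Y-rule applies to it, or an H-rule that enables a U- or Y-rule
overlapping it. -/
def Red (W : List Letter) : Prop :=
  (∃ A B p q κ o, W = A ++ p :: q :: B ∧ Rule κ p q o ∧ κ ≠ .h) ∨
  (∃ A B p q r p' q' κ o, W = A ++ p :: q :: r :: B ∧ Rule .h p q [p', q'] ∧ Rule κ q' r o ∧
    κ ≠ .h) ∨
  (∃ A B p q r q' r' κ o, W = A ++ p :: q :: r :: B ∧ Rule .h q r [q', r'] ∧ Rule κ p q' o ∧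
    κ ≠ .h)

/-- Does a U- or Y-rule apply to the pair `p, q`? -/
def uyB : Letter → Letter → Bool
  | (s, .pos), (s', .neg) => s == s' || s' == !s
  | (s, .pos), (s', .zero) => s == s'
  | (s, .zero), (s', .neg) => s == s'
  | _, _ => false

/-- The result of the H-rule applied to the pair `p, q`, if it applies. -/
def hB : Letter → Letter → Option (Letter × Letter)
  | (s, .pos), (s', .zero) => if s == s' then none else some ((s', .zero), (s, .pos))
  | (s, .zero), (s', .zero) => if s == s' then none else some ((s', .neg), (s, .pos))
  | (s, .zero), (s', .neg) => if s == s' then none else some ((s', .neg), (s, .zero))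
  | _, _ => none

theorem uyB_sound {p q : Letter} (h : uyB p q = true) : ∃ κ o, Rule κ p q o ∧ κ ≠ .h := by
  obtain ⟨s, i⟩ := p
  obtain ⟨s', j⟩ := q
  cases s <;> cases s' <;> cases i <;> cases j <;> simp [uyB] at h <;>
    first
    | exact ⟨_, _, Rule.u _, by simp⟩
    | exact ⟨_, _, Rule.y _ YPat.y1, by simp⟩
    | exact ⟨_, _, Rule.y _ YPat.y2, by simp⟩
    | exact ⟨_, _, Rule.y _ YPat.y3, by simp⟩

theorem hB_sound {p q : Letter} {r : Letter × Letter} (h : hB p q = some r) :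
    Rule .h p q [r.1, r.2] := by
  obtain ⟨s, i⟩ := p
  obtain ⟨s', j⟩ := q
  cases s <;> cases s' <;> cases i <;> cases j <;> simp [hB] at h <;> subst h <;>
    first
    | exact Rule.h _ HPat.h1
    | exact Rule.h _ HPat.h2
    | exact Rule.h _ HPat.h3

/-- A local test for reducibility at the end of a word, given in reversed order. -/
def top : List Letter → Bool
  | r :: q :: W => uyB q r || (match W with
    | p :: _ => (match hB p q with
        | some z => uyB z.2 r
        | none => false) || (match hB q r with
        | some z => uyB p z.1
        | none => false)
    | [] => false)
  | _ => false

theorem top_sound {acc : List Letter} (h : top acc = true) (W : List Letter) :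
    Red (acc.reverse ++ W) := by
  match acc, h with
  | r :: q :: acc, h =>
    simp only [top, Bool.or_eq_true] at h
    rcases h with h | h
    · obtain ⟨κ, o, hr, hκ⟩ := uyB_sound h
      exact Or.inl ⟨acc.reverse, W, q, r, κ, o, by simp, hr, hκ⟩
    · match acc, h with
      | p :: acc, h =>
        simp only [Bool.or_eq_true] at h
        rcases h with h | h
        · split at h
          · rename_i z hz
            obtain ⟨κ, o, hr, hκ⟩ := uyB_sound h
            exact Or.inr (Or.inl ⟨acc.reverse, W, p, q, r, _, _, κ, o, by simp, hB_sound hz, hr, hκ⟩)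
          · simp at h
        · split at h
          · rename_i z hz
            obtain ⟨κ, o, hr, hκ⟩ := uyB_sound h
            exact Or.inr (Or.inr ⟨acc.reverse, W, p, q, r, _, _, κ, o, by simp, hB_sound hz, hr, hκ⟩)
          · simp at h

/-- The lattice path of the word, started at `(a, b)`, stays in the dominant chamber after the
starting point and ends at the origin. -/
def Path : ℤ → ℤ → List Letter → Prop
  | a, b, [] => a = 0 ∧ b = 0
  | a, b, p :: W => 0 ≤ a + (wt p.1 p.2).1 ∧ 0 ≤ b + (wt p.1 p.2).2 ∧
      Path (a + (wt p.1 p.2).1) (b + (wt p.1 p.2).2) W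

theorem path_local {κ : Kind} {p q : Letter} {o : List Letter} (hr : Rule κ p q o)
    (B : List Letter) (a b : ℤ) (ha : 0 ≤ a) (hb : 0 ≤ b) (h : Path a b (o ++ B)) :
    Path a b (p :: q :: B) := by
  cases hr with
  | u s =>
    cases s <;> simp [Path, wt] at * <;> grind
  | y s hp =>
    cases s <;> cases hp <;> simp [Path, wt, add_assoc] at * <;> grind
  | h s hp =>
    cases s <;> cases hp <;> simp [Path, wt, add_assoc] at * <;> grind

theorem path_context (A : List Letter) {X Y : List Letter}
    (h : ∀ a b, 0 ≤ a → 0 ≤ b → Path a b X → Path a b Y) :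
    ∀ a b, 0 ≤ a → 0 ≤ b → Path a b (A ++ X) → Path a b (A ++ Y) := by
  induction A with
  | nil => simpa using h
  | cons p A ih =>
    intro a b _ _ hp
    obtain ⟨h1, h2, h3⟩ := hp
    exact ⟨h1, h2, ih _ _ h1 h2 h3⟩

/-- Words admitting a complete execution are dominant. -/
theorem Run.path {n : ℕ} {W : List Letter} {x : List St → K} (h : Run n W x) : Path 0 0 W := by
  induction h with
  | nil => simp [Path]
  | step A B p q o κ n x x' hr _ _ ih =>
    exact path_context A (path_local hr B) 0 0 le_rfl le_rfl (by simpa using ih)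

/-- Each letter lowers the sum of the coordinates by at most one. -/
theorem path_bound (W : List Letter) : ∀ a b, Path a b W → a + b ≤ W.length := by
  induction W with
  | nil => intro a b h; obtain ⟨rfl, rfl⟩ := h; simp
  | cons p W ih =>
    intro a b h
    have := ih _ _ h.2.2
    obtain ⟨s, j⟩ := p
    cases s <;> cases j <;> simp [wt] at this ⊢ <;> omega

/-- Is the sign string of a reversed word a rotation of `base`? -/
def isBase (acc : List Letter) : Bool :=
  (List.range 4).any fun r => (acc.reverse.map Prod.fst) == base.rotate r

theorem isBase_sound {acc : List Letter} (h : isBase acc = true) :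
    ∃ r, acc.reverse.map Prod.fst = base.rotate r := by
  simp only [isBase, List.any_eq_true, beq_iff_eq] at h
  obtain ⟨r, -, h⟩ := h
  exact ⟨r, h⟩

/-- All six letters. -/
def letters : List Letter :=
  [(true, .pos), (true, .zero), (true, .neg), (false, .pos), (false, .zero), (false, .neg)]

theorem mem_letters (p : Letter) : p ∈ letters := by
  obtain ⟨s, j⟩ := p
  cases s <;> cases j <;> simp [letters]

/-- Exhaustive search: every dominant extension of the reversed word `acc`, ending at `(a, b)`, by
at most `n` letters that closes up at the origin is empty, reducible, or has a rotation of `base`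
as its sign string. Branches that are already reducible or too far from the origin are cut. -/
def check : ℕ → List Letter → ℤ → ℤ → Bool
  | 0, acc, a, b => acc.isEmpty || isBase acc || !(a == 0 && b == 0)
  | n + 1, acc, a, b => (acc.isEmpty || isBase acc || !(a == 0 && b == 0)) &&
      letters.all fun p =>
        decide (a + (wt p.1 p.2).1 < 0) || decide (b + (wt p.1 p.2).2 < 0) ||
        decide ((n : ℤ) < a + (wt p.1 p.2).1 + (b + (wt p.1 p.2).2)) ||
        top (p :: acc) || check n (p :: acc) (a + (wt p.1 p.2).1) (b + (wt p.1 p.2).2)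

theorem check_sound (n : ℕ) : ∀ acc a b, check n acc a b = true → ∀ W, W.length ≤ n →
    Path a b W → acc.reverse ++ W = [] ∨ Red (acc.reverse ++ W) ∨
      ∃ r, (acc.reverse ++ W).map Prod.fst = base.rotate r := by
  have hnil : ∀ (acc : List Letter) (a b : ℤ),
      (acc.isEmpty || isBase acc || !(a == 0 && b == 0)) = true → Path a b [] →
      acc.reverse ++ [] = [] ∨ Red (acc.reverse ++ []) ∨
      ∃ r, (acc.reverse ++ []).map Prod.fst = base.rotate r := by
    rintro acc a b h ⟨rfl, rfl⟩
    simp only [BEq.rfl, Bool.and_self, Bool.not_true, Bool.or_false, Bool.or_eq_true,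
      List.isEmpty_iff] at h
    rcases h with h | h
    · left; simp [h]
    · right; right; simpa using isBase_sound h
  induction n with
  | zero =>
    intro acc a b h W hW hp
    obtain rfl : W = [] := by simpa using hW
    exact hnil acc a b h hp
  | succ n ih =>
    intro acc a b h W hW hp
    simp only [check, Bool.and_eq_true (_ || _)] at h
    match W, hW, hp with
    | [], _, hp => exact hnil acc a b h.1 hp
    | p :: W, hW, hp =>
      have h2 := List.all_eq_true.1 h.2 p (mem_letters p)
      obtain ⟨p1, p2, p3⟩ := hp
      have hb := path_bound W _ _ p3
      simp only [List.length_cons] at hW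
      simp only [Bool.or_eq_true, decide_eq_true_eq] at h2
      rcases h2 with (((h2 | h2) | h2) | h2) | h2
      · omega
      · omega
      · omega
      · right; left
        simpa using top_sound h2 W
      · simpa using ih _ _ _ h2 W (by omega) p3

theorem check_twelve : check 12 [] 0 0 = true := by decide +kernel

theorem red_of_path {W : List Letter} (hlen : W.length ≤ 12) (h : Path 0 0 W) (hW : W ≠ [])
    (hrot : ¬ ∃ r, W.map Prod.fst = base.rotate r) : Red W := by
  have := check_sound 12 [] 0 0 check_twelve W hlen h
  simp only [List.reverse_nil, List.nil_append] at this
  rcases this with h1 | h1 | h1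
  exacts [absurd h1 hW, h1, absurd h1 hrot]

/-! ### Conclusion -/

/-- Every execution from a word of length at most 12 whose signs are not a rotation of `base` has a
web tensor with the negative-exponent property. -/
theorem Run.ne (N : ℕ) : ∀ W : List Letter, W.length = N → N ≤ 12 →
    (¬ ∃ r, W.map Prod.fst = base.rotate r) → ∀ n x, Run n W x → NE W x := by
  induction N using Nat.strong_induction_on with
  | _ N ih =>
    intro W hN h12 hrot n x hrun
    -- Shorter words are never rotations of `base`, so the induction hypothesis applies to them.
    have ih' : ∀ W' : List Letter, W'.length < N → ∀ n x, Run n W' x → NE W' x := by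
      intro W' hlt n x hr
      refine ih _ hlt W' rfl (by omega) ?_ n x hr
      rintro ⟨r, hr⟩
      have := congrArg List.length hr
      simp [base] at this
      omega
    by_cases hW : W = []
    · subst hW
      generalize hE : ([] : List Letter) = E at hrun
      cases hrun with
      | nil _ hx => exact ⟨by simpa using hx, fun L hL hne => absurd (by simpa using hL) hne⟩
      | step => simp at hE
    have out_le : ∀ {κ : Kind}, κ ≠ .h → κ.out ≤ 1 := by
      intro κ hκ
      cases κ <;> simp_all [Kind.out]
    rcases red_of_path (hN ▸ h12) hrun.path hW hrot with
      ⟨A, B, p, q, κ, o, rfl, hr, hκ⟩ | ⟨A, B, p, q, r, p', q', κ, o, rfl, hr, hr', hκ⟩ |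
        ⟨A, B, p, q, r, q', r', κ, o, rfl, hr, hr', hκ⟩
    · obtain ⟨x', m, -, hrun', hx⟩ := exchange n _ _ hrun A B p q o κ rfl hr
      have := out_le hκ
      have := hr.length
      refine NE.uy hr hκ hx (ih' _ ?_ _ _ hrun')
      simp at hN ⊢
      omega
    · obtain ⟨x', m, -, hrun', hx⟩ := exchange n _ _ hrun A (r :: B) p q _ .h rfl hr
      obtain ⟨x'', m', -, hrun'', hx'⟩ :=
        exchange m _ _ hrun' (A ++ [p']) B q' r o κ (by simp) hr'
      have := out_le hκ
      have := hr'.length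
      refine NE.h_right hr hr' hκ (by simpa using hx) (by simpa using hx') (by simpa using hrun')
        (ih' _ ?_ _ _ (by simpa using hrun''))
      simp at hN ⊢
      omega
    · obtain ⟨x', m, -, hrun', hx⟩ := exchange n _ _ hrun (A ++ [p]) B q r _ .h (by simp) hr
      obtain ⟨x'', m', -, hrun'', hx'⟩ :=
        exchange m _ _ hrun' A (r' :: B) p q' o κ (by simp) hr'
      have := out_le hκ
      have := hr'.length
      refine NE.h_left hr hr' hκ (by simpa using hx) (by simpa using hx') (by simpa using hrun')
        (ih' _ ?_ _ _ (by simpa using hrun''))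
      simp at hN ⊢
      omega

theorem sum_St (f : St → K) : ∑ c, f c = f .neg + (f .zero + f .pos) := by
  have : (Finset.univ : Finset St) = {.neg, .zero, .pos} := rfl
  simp [this]

theorem app_u (a b : St) (s : Bool) (f : List St → K) :
    (if s then bCpm a b else bCmp a b) * f [] = app .u a b f := by
  cases s <;> cases a <;> cases b <;> simp [app, coef, bCpm, bCmp]

theorem app_y (a b : St) (s : Bool) (f : List St → K) :
    ∑ c, (if s then tYpp a b c else tYmm a b c) * f [c] = app .y a b f := by
  cases s <;> cases a <;> cases b <;> simp [app, coef, tYpp, tYmm, sum_St]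

theorem app_h (a b : St) (s : Bool) (f : List St → K) :
    ∑ c, ∑ d, (if s then HCpm a b c d else HCmp a b c d) * f [c, d] = app .h a b f := by
  have hv := v_ne_zero
  cases s <;> cases a <;> cases b <;>
    simp [app, coef, HCpm, HCmp, tYpp, tLpp, sum_St, hv] <;> ring

/-- An execution, as a rewriting of pairs of lists, is a `Run` on the word of zipped letters. The
three preceding lemmas identify the sparse local maps with the matrices defining `web`. -/
theorem exec_run {S : List Bool} {J : List St} (e : Exec S J) :
    S.length = J.length ∧ ∃ n, Run n (S.zip J) (web e) := by
  induction e with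
  | nil => exact ⟨rfl, 0, Run.nil _ (by simp [web])⟩
  | hstep A B P Q s1 s2 j1 j2 j1' j2' hl hs hp e ih =>
    obtain ⟨hlen, n, hn⟩ := ih
    obtain rfl : s2 = !s1 := by cases s1 <;> cases s2 <;> simp_all
    refine ⟨by simpa using hlen, n + 1, ?_⟩
    rw [List.zip_append hl] at hn ⊢
    refine Run.step (A.zip P) (B.zip Q) _ _ _ .h n _ (web e) (Rule.h s1 hp) ?_ (by simpa using hn)
    intro L a b R hL hR
    have hL' : L.length = A.length := by simpa [hl] using hL
    rw [← app_h a b s1]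
    simp [web, ← hL']
  | ustep A B P Q s1 s2 hl hs e ih =>
    obtain ⟨hlen, n, hn⟩ := ih
    obtain rfl : s2 = !s1 := by cases s1 <;> cases s2 <;> simp_all
    refine ⟨by simp at hlen ⊢; omega, n + 1, ?_⟩
    rw [List.zip_append hl] at hn ⊢
    refine Run.step (A.zip P) (B.zip Q) _ _ _ .u n _ (web e) (Rule.u s1) ?_ (by simpa using hn)
    intro L a b R hL hR
    have hL' : L.length = A.length := by simpa [hl] using hL
    rw [← app_u a b s1]
    simp [web, ← hL']
  | ystep A B P Q s j1 j2 j' hl hp e ih =>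
    obtain ⟨hlen, n, hn⟩ := ih
    refine ⟨by simp at hlen ⊢; omega, n + 1, ?_⟩
    rw [List.zip_append hl] at hn ⊢
    refine Run.step (A.zip P) (B.zip Q) _ _ _ .y n _ (web e) (Rule.y s hp) ?_ (by simpa using hn)
    intro L a b R hL hR
    have hL' : L.length = A.length := by simpa [hl] using hL
    rw [← app_y a b s]
    simp [web, ← hL']

end WebGrowth

/-- for every sign string of length at most 12 that is not a
cyclic rotation of `(+,+,−,−,+,+,−,−,+,+,−,−)`, every basis web has the
negative-exponent property. -/
theorem web_negExp_of_not_rotation (S : List Bool) (hlen : S.length ≤ 12)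
    (hrot : ¬ ∃ r : ℕ, S = base.rotate r) :
    ∀ J : List St, Dominant S J → ∀ e : Exec S J, NegExpProp S.length (web e) J := by
  intro J _ e
  obtain ⟨hSJ, n, hrun⟩ := WebGrowth.exec_run e
  have hfst : (S.zip J).map Prod.fst = S := List.map_fst_zip hSJ.le
  have hsnd : (S.zip J).map Prod.snd = J := List.map_snd_zip hSJ.ge
  have hl : (S.zip J).length = S.length := by simp [hSJ]
  have h := WebGrowth.Run.ne _ (S.zip J) hl hlen (by rwa [hfst]) n _ hrun
  rw [WebGrowth.NE, WebGrowth.states, hsnd, hl] at h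
  exact h

end
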